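/- Let n ≥ 1, T₀ = 1, and A = {(0,0,0), (0,0,1)} ⊆ ℍ^n. Set r₁ = 1/(2√π), R₁ = (r₁/√n, …, r₁/√n) ∈ ℝ^n, r₂ = r₁·√((π+2)/(2π)), and R₂ = (r₂/√n, …, r₂/√n) ∈ ℝ^n. Then, writing points of ℍ^n in complex notation (z,t) with z ∈ ℂ^n: (a) the points p₂ = (R₁, 2(π/2 − 1)r₁²) and q₂ = (R₁, 2(3π/2 + 1)r₁²) belong to G²(A); and (b) the curve σ₂ : [0,2π] → ℍ^n defined by σ₂(s) = (R₁ + (1 − e^{−is})R₂, 2(π/2 − 1)r₁² + 2(s − sin s)r₂² − 2(sin s)⟨R₁,R₂⟩), where ⟨·,·⟩ is the Euclidean inner product on ℝ^n, is a geodesic connecting p₂ to q₂. -/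

import Mathlib

open MeasureTheory Set Real
open scoped ENNReal NNReal

noncomputable section

/-- Points of the Heisenberg group `ℍⁿ`, written `(x, y, t)` with `x, y ∈ ℝⁿ`, `t ∈ ℝ`. -/
abbrev Hpt (n : ℕ) : Type := (Fin n → ℝ) × (Fin n → ℝ) × ℝ

/-- The projection of a point of `ℍⁿ` onto the horizontal `z = (x,y)` plane, viewed as a
point of the Euclidean space `ℝ^{2n}` (so that lengths are Euclidean lengths). -/
def hproj {n : ℕ} (p : Hpt n) : EuclideanSpace ℝ (Fin n ⊕ Fin n) :=
  (WithLp.equiv 2 ((Fin n ⊕ Fin n) → ℝ)).symm (Sum.elim p.1 p.2.1)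

/-- A curve `γ` is a horizontal curve on `[a,b]` if it is (absolutely continuous, here:
Lipschitz) and almost everywhere it has a derivative `γ' = (x', y', t')` satisfying the
horizontality condition `t' = 2 ∑ⱼ (xⱼ' yⱼ - yⱼ' xⱼ)`. -/
def IsHorizontal {n : ℕ} (γ : ℝ → Hpt n) (a b : ℝ) : Prop :=
  a ≤ b ∧ (∃ K : NNReal, LipschitzOnWith K γ (Icc a b)) ∧
    ∃ γ' : ℝ → Hpt n,
      (∀ᵐ s ∂(volume.restrict (Icc a b)), HasDerivAt γ (γ' s) s) ∧
      (∀ᵐ s ∂(volume.restrict (Icc a b)),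
        (γ' s).2.2 = 2 * ∑ j, ((γ' s).1 j * (γ s).2.1 j - (γ' s).2.1 j * (γ s).1 j))

/-- The length of a horizontal curve on `[a,b]`: the Euclidean length (total variation)
of its projection to the `z`-plane `ℝ^{2n}`. -/
def hLength {n : ℕ} (γ : ℝ → Hpt n) (a b : ℝ) : ℝ≥0∞ :=
  eVariationOn (fun s => hproj (γ s)) (Icc a b)

/-- The Carnot–Carathéodory distance: the infimum of lengths of horizontal curves
joining `p` to `q`. -/
def ccDist {n : ℕ} (p q : Hpt n) : ℝ≥0∞ :=
  ⨅ (γ : ℝ → Hpt n) (a : ℝ) (b : ℝ) (_ : IsHorizontal γ a b)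
    (_ : γ a = p) (_ : γ b = q), hLength γ a b

/-- `γ` is a geodesic on `[a,b]`: a horizontal curve whose length equals the
Carnot–Carathéodory distance between its endpoints. -/
def IsGeodesicOn {n : ℕ} (γ : ℝ → Hpt n) (a b : ℝ) : Prop :=
  IsHorizontal γ a b ∧ hLength γ a b = ccDist (γ a) (γ b)

/-- A set `A ⊆ ℍⁿ` is geodetically convex if every geodesic connecting any two points of
`A` lies in `A`. -/
def GeodConvexSet {n : ℕ} (A : Set (Hpt n)) : Prop :=
  ∀ p ∈ A, ∀ q ∈ A, ∀ (γ : ℝ → Hpt n) (a b : ℝ),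
    IsGeodesicOn γ a b → γ a = p → γ b = q → ∀ s ∈ Icc a b, γ s ∈ A

/-- A function `u : ℍⁿ → ℝ` is geodetically convex if its composition with every geodesic
is convex. -/
def GeodConvexFun {n : ℕ} (u : Hpt n → ℝ) : Prop :=
  ∀ (γ : ℝ → Hpt n) (a b : ℝ), IsGeodesicOn γ a b → ConvexOn ℝ (Icc a b) (u ∘ γ)

/-- The union of the images of all geodesics connecting pairs of points of `S`. -/
def geodJoin {n : ℕ} (S : Set (Hpt n)) : Set (Hpt n) :=
  {z | ∃ p ∈ S, ∃ q ∈ S, ∃ (γ : ℝ → Hpt n) (a b : ℝ),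
    IsGeodesicOn γ a b ∧ γ a = p ∧ γ b = q ∧ z ∈ γ '' Icc a b}

/-- The iterated geodesic hulls `G^m(A)`, with `G^0(A) = A`. -/
def Gm {n : ℕ} (A : Set (Hpt n)) : ℕ → Set (Hpt n)
  | 0 => A
  | (m + 1) => geodJoin (Gm A m)

theorem deriv_norm_le {E : Type*} [NormedAddCommGroup E] [InnerProductSpace ℝ E]
    {z : ℝ → E} {V : ℝ → ℝ} {a b s V' : ℝ} {z' : E} (hs : s ∈ Ioo a b)
    (hzV : ∀ s ∈ Icc a b, ∀ t ∈ Icc a b, s ≤ t → ‖z t - z s‖ ≤ V t - V s)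
    (hz : HasDerivAt z z' s) (hV : HasDerivAt V V' s) : ‖z'‖ ≤ V' := by
  have h1 := (hasDerivAt_iff_tendsto_slope.1 hz).mono_left
    (nhdsWithin_mono s (fun x (hx : x ∈ Ioi s) => ne_of_gt hx))
  have h2 := (hasDerivAt_iff_tendsto_slope.1 hV).mono_left
    (nhdsWithin_mono s (fun x (hx : x ∈ Ioi s) => ne_of_gt hx))
  refine le_of_tendsto_of_tendsto h1.norm h2 ?_
  filter_upwards [Ioo_mem_nhdsGT hs.2] with t ht
  have hst : 0 < t - s := by linarith [ht.1]
  rw [slope_def_module, slope_def_field, norm_smul, norm_inv, Real.norm_eq_abs, abs_of_pos hst,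
    div_eq_inv_mul]
  exact mul_le_mul_of_nonneg_left (hzV s ⟨hs.1.le, hs.2.le⟩ t ⟨by linarith [hs.1, ht.1], ht.2.le⟩
    ht.1.le) (by positivity)

theorem le_of_ac {F : ℝ → ℝ} {a b : ℝ} (hab : a ≤ b) (hF : AbsolutelyContinuousOnInterval F a b)
    (h : ∀ᵐ s ∂(volume.restrict (Icc a b)), 0 ≤ deriv F s) : F a ≤ F b := by
  have h1 := hF.integral_deriv_eq_sub
  have h2 : 0 ≤ ∫ x in a..b, deriv F x := by
    apply intervalIntegral.integral_nonneg_of_ae_restrict hab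
    exact h
  linarith

theorem iso_aux {E : Type*} [NormedAddCommGroup E] [InnerProductSpace ℝ E]
    (J : E → E) (hJ1 : ∀ x, inner ℝ x (J x) = 0) (hJ2 : ∀ x, ‖J x‖ = ‖x‖)
    (z z' : ℝ → E) (u V : ℝ → ℝ) (a b : ℝ) (hab : a ≤ b) (K1 K2 K3 : ℝ≥0)
    (hz : LipschitzOnWith K1 z (Icc a b)) (hu : LipschitzOnWith K2 u (Icc a b))
    (hV : LipschitzOnWith K3 V (Icc a b))
    (hza : z a = 0) (hzb : z b = 0) (hVa : V a = 0)
    (hzV : ∀ s ∈ Icc a b, ∀ t ∈ Icc a b, s ≤ t → ‖z t - z s‖ ≤ V t - V s)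
    (hz' : ∀ᵐ s ∂(volume.restrict (Icc a b)), HasDerivAt z (z' s) s)
    (hu' : ∀ᵐ s ∂(volume.restrict (Icc a b)), HasDerivAt u (2 * inner ℝ (z' s) (J (z s))) s) :
    π * (u b - u a) ≤ V b ^ 2 := by
  have hmono : ∀ s ∈ Icc a b, ∀ t ∈ Icc a b, s ≤ t → V s ≤ V t := fun s hs t ht h => by
    linarith [hzV s hs t ht h, norm_nonneg (z t - z s)]
  have hVb : 0 ≤ V b := by
    rw [← hVa]; exact hmono a (left_mem_Icc.2 hab) b (right_mem_Icc.2 hab) hab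
  have key : ∀ ε > 0, π * (u b - u a) ≤ V b * (V b + 2 * ε) := by
    intro ε hε
    set L := V b + 2 * ε with hL
    have hLpos : 0 < L := by positivity
    set k := π / L with hk
    have hkpos : 0 < k := by positivity
    have hkL : k * L = π := by rw [hk]; field_simp
    set θ : ℝ → ℝ := fun s => k * (V s + ε) with hθ
    set C : ℝ → ℝ := fun x => cos x / sin x with hC
    have hθm : MapsTo θ (Icc a b) (Icc (k * ε) (π - k * ε)) := by
      intro s hs
      have h1 := hmono a (left_mem_Icc.2 hab) s hs hs.1
      have h2 := hmono s hs b (right_mem_Icc.2 hab) hs.2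
      rw [hVa] at h1
      constructor
      · simp only [hθ]; nlinarith
      · simp only [hθ]; rw [← hkL, hL]; nlinarith
    have hsin : ∀ x ∈ Icc (k * ε) (π - k * ε), 0 < sin x := by
      intro x hx
      have : 0 < k * ε := by positivity
      exact sin_pos_of_pos_of_lt_pi (by linarith [hx.1]) (by linarith [hx.2])
    have hCd : ContDiffOn ℝ 1 C (Icc (k * ε) (π - k * ε)) :=
      Real.contDiff_cos.contDiffOn.div Real.contDiff_sin.contDiffOn (fun x hx => (hsin x hx).ne')
    obtain ⟨K4, hCL⟩ := hCd.exists_lipschitzOnWith (by decide) (convex_Icc _ _) isCompact_Icc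
    have hVac : AbsolutelyContinuousOnInterval V a b :=
      LipschitzOnWith.absolutelyContinuousOnInterval (by rwa [uIcc_of_le hab])
    have huac : AbsolutelyContinuousOnInterval u a b :=
      LipschitzOnWith.absolutelyContinuousOnInterval (by rwa [uIcc_of_le hab])
    have hθL : LipschitzOnWith (‖k‖₊ * K3) θ (Icc a b) := by
      rw [lipschitzOnWith_iff_dist_le_mul] at hV ⊢
      intro x hx y hy
      have := hV x hx y hy
      simp only [hθ, Real.dist_eq] at this ⊢
      rw [show k * (V x + ε) - k * (V y + ε) = k * (V x - V y) by ring, abs_mul]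
      simp only [NNReal.coe_mul, coe_nnnorm, Real.norm_eq_abs]
      rw [mul_assoc]
      gcongr
    have hCac : AbsolutelyContinuousOnInterval (C ∘ θ) a b :=
      LipschitzOnWith.absolutelyContinuousOnInterval
        (by rw [uIcc_of_le hab]; exact hCL.comp hθL hθm)
    have hnac : AbsolutelyContinuousOnInterval (fun s => ‖z s‖) a b :=
      LipschitzOnWith.absolutelyContinuousOnInterval
        (by rw [uIcc_of_le hab]; exact lipschitzWith_one_norm.comp_lipschitzOnWith hz)
    set F : ℝ → ℝ := fun s => V s - k * u s - k * (C (θ s) * (‖z s‖ * ‖z s‖)) with hF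
    have hFac : AbsolutelyContinuousOnInterval F a b :=
      (hVac.sub (huac.const_mul k)).sub ((hCac.mul (hnac.mul hnac)).const_mul k)
    have hVd : ∀ᵐ s ∂(volume.restrict (Icc a b)), DifferentiableAt ℝ V s := by
      rw [ae_restrict_iff' measurableSet_Icc, ← uIcc_of_le hab]
      exact hVac.ae_differentiableAt
    have hIoo : ∀ᵐ s ∂(volume.restrict (Icc a b)), s ∈ Ioo a b := by
      rw [← restrict_Ioo_eq_restrict_Icc]
      exact ae_restrict_mem measurableSet_Ioo
    have hle := le_of_ac hab hFac (by
      filter_upwards [hVd, hIoo, hz', hu'] with s h1 h2 h3 h4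
      have h5 := deriv_norm_le h2 hzV h3 h1.hasDerivAt
      have hsI : s ∈ Icc a b := ⟨h2.1.le, h2.2.le⟩
      have hsp := hsin _ (hθm hsI)
      set V' := deriv V s
      have hθd : HasDerivAt θ (k * V') s := (h1.hasDerivAt.add_const ε).const_mul k
      have hCdr : HasDerivAt C (-(1 + C (θ s) ^ 2)) (θ s) := by
        have := (Real.hasDerivAt_cos (θ s)).div (Real.hasDerivAt_sin (θ s)) hsp.ne'
        refine this.congr_deriv ?_
        simp only [hC]
        field_simp
        ring
      have hNd : HasDerivAt (fun s => ‖z s‖ * ‖z s‖) (2 * inner ℝ (z s) (z' s)) s := by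
        have := h3.norm_sq
        simpa [pow_two] using this
      have hFd := (h1.hasDerivAt.sub (h4.const_mul k)).sub
        (((hCdr.comp s hθd).mul hNd).const_mul k)
      have hFd' : deriv F s = _ := hFd.deriv
      rw [hFd']
      set c := C (θ s)
      set m := c • z s + J (z s) with hm
      have hm2 : ‖m‖ ^ 2 = (1 + c ^ 2) * (‖z s‖ * ‖z s‖) := by
        rw [hm, norm_add_sq_real, norm_smul, inner_smul_left, hJ1, hJ2, mul_pow, Real.norm_eq_abs,
          sq_abs]
        ring
      have hin : inner ℝ (z' s) m = c * inner ℝ (z s) (z' s) + inner ℝ (z' s) (J (z s)) := by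
        rw [hm, inner_add_right, inner_smul_right, real_inner_comm]
      have hcs : inner ℝ (z' s) m ≤ V' * ‖m‖ :=
        (real_inner_le_norm _ _).trans (by gcongr)
      have hV'0 : 0 ≤ V' := (norm_nonneg _).trans h5
      simp only [Function.comp]
      have e : V' - k * (2 * inner ℝ (z' s) (J (z s))) - k * (-(1 + c ^ 2) * (k * V') * (‖z s‖ * ‖z s‖)
          + c * (2 * inner ℝ (z s) (z' s))) = V' * (1 + k ^ 2 * ‖m‖ ^ 2) - 2 * k * inner ℝ (z' s) m := by
        rw [hm2, hin]; ring
      have : 0 ≤ V' * (1 + k ^ 2 * ‖m‖ ^ 2) - 2 * k * inner ℝ (z' s) m := by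
        have : 2 * k * inner ℝ (z' s) m ≤ 2 * k * (V' * ‖m‖) := by gcongr
        nlinarith [mul_nonneg hV'0 (sq_nonneg (1 - k * ‖m‖))]
      rw [← e] at this
      exact this)
    simp only [hF, hza, hzb, hVa, norm_zero, mul_zero, sub_zero] at hle
    have : k * (u b - u a) ≤ V b := by linarith
    calc π * (u b - u a) = L * (k * (u b - u a)) := by rw [← hkL]; ring
      _ ≤ L * V b := by gcongr
      _ = _ := by ring
  apply le_of_forall_pos_le_add
  intro δ hδ
  have h := key (δ / (2 * (V b + 1))) (by positivity)
  refine h.trans ?_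
  have : V b * (2 * (δ / (2 * (V b + 1)))) ≤ δ := by
    rw [show V b * (2 * (δ / (2 * (V b + 1)))) = δ * (V b / (V b + 1)) by field_simp]
    have : V b / (V b + 1) ≤ 1 := by rw [div_le_one (by positivity)]; linarith
    nlinarith
  nlinarith
/-- `hproj` as a continuous linear map. -/
def hprojL (n : ℕ) : Hpt n →L[ℝ] EuclideanSpace ℝ (Fin n ⊕ Fin n) :=
  LinearMap.toContinuousLinearMap
    { toFun := hproj
      map_add' := by
        intro p q
        ext i
        cases i <;> simp [hproj]
      map_smul' := by
        intro c p
        ext i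
        cases i <;> simp [hproj] }

theorem hprojL_apply {n : ℕ} (p : Hpt n) : hprojL n p = hproj p := rfl

/-- The rotation by a right angle. -/
def Jm {n : ℕ} (z : EuclideanSpace ℝ (Fin n ⊕ Fin n)) : EuclideanSpace ℝ (Fin n ⊕ Fin n) :=
  WithLp.toLp 2 (Sum.elim (fun j => z (Sum.inr j)) (fun j => -z (Sum.inl j)))

theorem inner_Jm {n : ℕ} (w z : EuclideanSpace ℝ (Fin n ⊕ Fin n)) :
    inner ℝ w (Jm z) = ∑ j, (w (Sum.inl j) * z (Sum.inr j) - w (Sum.inr j) * z (Sum.inl j)) := by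
  rw [PiLp.inner_apply]
  rw [Finset.sum_sub_distrib]
  simp [Jm, Fintype.sum_sum_type, mul_comm, sub_eq_add_neg]

theorem inner_self_Jm {n : ℕ} (z : EuclideanSpace ℝ (Fin n ⊕ Fin n)) : inner ℝ z (Jm z) = 0 := by
  rw [inner_Jm]
  apply Finset.sum_eq_zero
  intro j _
  ring

theorem norm_Jm {n : ℕ} (z : EuclideanSpace ℝ (Fin n ⊕ Fin n)) : ‖Jm z‖ = ‖z‖ := by
  rw [EuclideanSpace.norm_eq, EuclideanSpace.norm_eq]
  simp [Jm, Fintype.sum_sum_type, add_comm]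

theorem eVar_le {E : Type*} [PseudoEMetricSpace E] {f : ℝ → E} {K : ℝ≥0} {s t : ℝ}
    (h : LipschitzOnWith K f (Icc s t)) :
    eVariationOn f (Icc s t) ≤ K * ENNReal.ofReal (t - s) := by
  have := h.comp_eVariationOn_le (g := id) (s := Icc s t) (mapsTo_id _)
  rwa [eVariationOn_id_Icc] at this

theorem iso_ineq {n : ℕ} {γ : ℝ → Hpt n} {a b : ℝ} (h : IsHorizontal γ a b)
    (hz : hproj (γ a) = hproj (γ b)) :
    ENNReal.ofReal (√(π * ((γ b).2.2 - (γ a).2.2))) ≤ hLength γ a b := by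
  obtain ⟨hab, ⟨K, hK⟩, γ', h1, h2⟩ := h
  set Z : ℝ → EuclideanSpace ℝ (Fin n ⊕ Fin n) := fun s => hproj (γ s) with hZ
  have hZL : LipschitzOnWith (‖hprojL n‖₊ * K) Z (Icc a b) :=
    (hprojL n).lipschitz.comp_lipschitzOnWith hK
  have hbv := hZL.locallyBoundedVariationOn
  set V : ℝ → ℝ := variationOnFromTo Z (Icc a b) a with hV
  have ha := left_mem_Icc.2 hab
  have hb := right_mem_Icc.2 hab
  have hVs : ∀ s ∈ Icc a b, ∀ t ∈ Icc a b, s ≤ t →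
      V t - V s = (eVariationOn Z (Icc s t)).toReal := by
    intro s hs t ht hst
    rw [hV, variationOnFromTo.sub_right hbv ha ht hs, variationOnFromTo.eq_of_le _ _ hst,
      inter_eq_right.2 (Icc_subset_Icc hs.1 ht.2)]
  have hfin : ∀ s ∈ Icc a b, ∀ t ∈ Icc a b, eVariationOn Z (Icc s t) ≠ ∞ := by
    intro s hs t ht
    have := hbv s t hs ht
    rwa [inter_eq_right.2 (Icc_subset_Icc hs.1 ht.2)] at this
  have hVb : V b = (hLength γ a b).toReal := by
    rw [hV, variationOnFromTo.eq_of_le _ _ hab, inter_self]; rfl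
  have hVa : V a = 0 := variationOnFromTo.self _ _ _
  have hVL : LipschitzOnWith (‖hprojL n‖₊ * K) V (Icc a b) := by
    apply LipschitzOnWith.of_le_add_mul
    intro s hs t ht
    rcases le_total s t with hst | hst
    · have := hVs s hs t ht hst
      have h3 : 0 ≤ (eVariationOn Z (Icc s t)).toReal := ENNReal.toReal_nonneg
      have h4 : 0 ≤ ((‖hprojL n‖₊ * K : ℝ≥0) : ℝ) * dist s t := by positivity
      linarith
    · have := hVs t ht s hs hst
      have h3 := eVar_le (hZL.mono (Icc_subset_Icc ht.1 hs.2))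
      have h4 := ENNReal.toReal_mono (by finiteness) h3
      rw [ENNReal.toReal_mul, ENNReal.toReal_ofReal (by linarith), ENNReal.coe_toReal] at h4
      rw [Real.dist_eq, abs_of_nonneg (by linarith : 0 ≤ s - t)]
      linarith
  set u : ℝ → ℝ := fun s => (γ s).2.2 - 2 * inner ℝ (Z s) (Jm (Z a)) with hu
  -- a linear functional producing `u`
  set ℓ : Hpt n →L[ℝ] ℝ := (ContinuousLinearMap.snd ℝ (Fin n → ℝ) ℝ).comp
      (ContinuousLinearMap.snd ℝ (Fin n → ℝ) ((Fin n → ℝ) × ℝ))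
      - (2 : ℝ) • ((innerSL ℝ (Jm (Z a))).comp (hprojL n)) with hl
  have hul : ∀ s, u s = ℓ (γ s) := by
    intro s
    simp [hu, hl, hprojL_apply, hZ, real_inner_comm]
  have huL : LipschitzOnWith (‖ℓ‖₊ * K) u (Icc a b) := by
    have : u = ℓ ∘ γ := funext hul
    rw [this]
    exact ℓ.lipschitz.comp_lipschitzOnWith hK
  have main := iso_aux Jm inner_self_Jm norm_Jm (fun s => Z s - Z a) (fun s => hproj (γ' s)) u V a b
    hab (‖hprojL n‖₊ * K) (‖ℓ‖₊ * K) (‖hprojL n‖₊ * K)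
    (by
      rw [lipschitzOnWith_iff_dist_le_mul] at hZL ⊢
      intro x hx y hy
      rw [dist_sub_right]
      exact hZL x hx y hy) huL hVL (by simp) (by simp [hZ, hz]) hVa
    (by
      intro s hs t ht hst
      rw [hVs s hs t ht hst, sub_sub_sub_cancel_right, ← dist_eq_norm, dist_comm, dist_edist]
      exact ENNReal.toReal_mono (hfin s hs t ht)
        (eVariationOn.edist_le _ (left_mem_Icc.2 hst) (right_mem_Icc.2 hst)))
    (by
      filter_upwards [h1] with s hs
      exact ((hprojL n).hasFDerivAt.comp_hasDerivAt s hs).sub_const (Z a))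
    (by
      filter_upwards [h1, h2] with s hs hs2
      have := ℓ.hasFDerivAt.comp_hasDerivAt s hs
      have e : u = ℓ ∘ γ := funext hul
      rw [e]
      refine this.congr_deriv ?_
      have : ℓ (γ' s) = (γ' s).2.2 - 2 * inner ℝ (hproj (γ' s)) (Jm (Z a)) := by
        simp [hl, hprojL_apply, real_inner_comm]
      rw [this, hs2, inner_Jm, inner_Jm, ← mul_sub, ← Finset.sum_sub_distrib]
      congr 1
      apply Finset.sum_congr rfl
      intro j _
      simp [hZ, hproj]
      ring)
  have hub : u b - u a = (γ b).2.2 - (γ a).2.2 := by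
    simp [hu, hZ, hz]
  rw [hub, hVb] at main
  rw [ENNReal.ofReal_le_iff_le_toReal (show hLength γ a b ≠ ∞ from hfin a ha b hb)]
  exact Real.sqrt_le_iff.2 ⟨ENNReal.toReal_nonneg, main⟩

theorem geod_of {n : ℕ} {γ : ℝ → Hpt n} {a b : ℝ} (M : ℝ≥0∞) (h : IsHorizontal γ a b)
    (h1 : hLength γ a b ≤ M)
    (h2 : ∀ (η : ℝ → Hpt n) (c d : ℝ), IsHorizontal η c d → η c = γ a → η d = γ b →
      M ≤ hLength η c d) : IsGeodesicOn γ a b := by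
  refine ⟨h, le_antisymm ?_ ?_⟩
  · unfold ccDist
    refine le_iInf fun η => le_iInf fun c => le_iInf fun d => le_iInf fun hη => le_iInf fun e1 =>
      le_iInf fun e2 => h1.trans (h2 η c d hη e1 e2)
  · unfold ccDist
    exact iInf_le_of_le γ (iInf_le_of_le a (iInf_le_of_le b (iInf_le_of_le h
      (iInf_le_of_le rfl (iInf_le_of_le rfl le_rfl)))))

theorem norm_hproj_const {n : ℕ} (hn : 1 ≤ n) (x y t : ℝ) :
    ‖hproj ((fun _ => x / √n, fun _ => y / √n, t) : Hpt n)‖ = √(x ^ 2 + y ^ 2) := by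
  have hn' : (0 : ℝ) < n := by exact_mod_cast hn
  rw [EuclideanSpace.norm_eq]
  congr 1
  simp [hproj, Fintype.sum_sum_type, div_pow]
  field_simp

theorem horiz_const {n : ℕ} (hn : 1 ≤ n) (x y t x' y' t' : ℝ → ℝ) {a b : ℝ} (hab : a ≤ b)
    (hx : ∀ s, HasDerivAt x (x' s) s) (hy : ∀ s, HasDerivAt y (y' s) s)
    (ht : ∀ s, HasDerivAt t (t' s) s)
    (hx' : Continuous x') (hy' : Continuous y') (ht' : Continuous t')
    (h : ∀ s, t' s = 2 * (x' s * y s - y' s * x s)) :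
    IsHorizontal (fun s => ((fun _ => x s / √n, fun _ => y s / √n, t s) : Hpt n)) a b := by
  have hn' : (0 : ℝ) < n := by exact_mod_cast hn
  have hd : ∀ s, HasDerivAt (fun s => ((fun _ => x s / √n, fun _ => y s / √n, t s) : Hpt n))
      ((fun _ => x' s / √n, fun _ => y' s / √n, t' s) : Hpt n) s := by
    intro s
    refine HasDerivAt.prodMk (hasDerivAt_pi.2 fun _ => (hx s).div_const _)
      (HasDerivAt.prodMk (hasDerivAt_pi.2 fun _ => (hy s).div_const _) (ht s))
  refine ⟨hab, ?_, _, Filter.Eventually.of_forall hd, Filter.Eventually.of_forall ?_⟩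
  · have hc : ContDiff ℝ 1 (fun s => ((fun _ => x s / √n, fun _ => y s / √n, t s) : Hpt n)) := by
      rw [contDiff_one_iff_deriv]
      refine ⟨fun s => (hd s).differentiableAt, ?_⟩
      rw [funext fun s => (hd s).deriv]
      fun_prop
    exact hc.contDiffOn.exists_lipschitzOnWith (by decide) (convex_Icc _ _) isCompact_Icc
  · intro s
    simp only [h, Finset.sum_const, Finset.card_univ, Fintype.card_fin, nsmul_eq_mul]
    have : √(n : ℝ) ^ 2 = n := Real.sq_sqrt hn'.le
    have h0 : √(n : ℝ) ≠ 0 := by positivity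
    field_simp
    rw [this]

theorem len_const {n : ℕ} (hn : 1 ≤ n) (x y t x' y' : ℝ → ℝ) {a b r : ℝ} (hr : 0 ≤ r)
    (hx : ∀ s, HasDerivAt x (x' s) s) (hy : ∀ s, HasDerivAt y (y' s) s)
    (h : ∀ s, x' s ^ 2 + y' s ^ 2 = r ^ 2) :
    hLength (fun s => ((fun _ => x s / √n, fun _ => y s / √n, t s) : Hpt n)) a b
      ≤ ENNReal.ofReal (r * (b - a)) := by
  have hd : ∀ s, HasDerivAt (fun s => hproj ((fun _ => x s / √n, fun _ => y s / √n, t s) : Hpt n))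
      (hproj ((fun _ => x' s / √n, fun _ => y' s / √n, 0) : Hpt n)) s := by
    change ∀ s, HasDerivAt (fun s => hproj ((fun _ => x s / √n, fun _ => y s / √n, 0) : Hpt n)) _ s
    intro s
    have h1 : HasDerivAt (fun s => ((fun _ => x s / √n, fun _ => y s / √n, 0) : Hpt n))
        ((fun _ => x' s / √n, fun _ => y' s / √n, 0) : Hpt n) s :=
      HasDerivAt.prodMk (hasDerivAt_pi.2 fun _ => (hx s).div_const _)
        (HasDerivAt.prodMk (hasDerivAt_pi.2 fun _ => (hy s).div_const _) (hasDerivAt_const s (0:ℝ)))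
    have h2 := (hprojL n).hasFDerivAt.comp_hasDerivAt s h1
    exact h2
  have hL : LipschitzWith r.toNNReal
      (fun s => hproj ((fun _ => x s / √n, fun _ => y s / √n, t s) : Hpt n)) := by
    apply lipschitzWith_of_nnnorm_deriv_le (fun s => (hd s).differentiableAt)
    intro s
    rw [(hd s).deriv, ← NNReal.coe_le_coe, coe_nnnorm, norm_hproj_const hn, h, Real.sqrt_sq hr,
      Real.coe_toNNReal _ hr]
  refine (eVar_le (hL.lipschitzOnWith (s := Icc a b))).trans ?_
  rw [ENNReal.ofReal_mul hr]
  rfl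

/-- A lifted circle. -/
def circ (n : ℕ) (a b c t0 : ℝ) : ℝ → Hpt n := fun s =>
  (fun _ => (c + ((1 - cos s) * a - sin s * b)) / √n,
   fun _ => ((1 - cos s) * b + sin s * a) / √n,
   t0 + 2 * (s - sin s) * (a ^ 2 + b ^ 2) - 2 * c * ((1 - cos s) * b + sin s * a))

theorem circ_geod {n : ℕ} (hn : 1 ≤ n) (a b c t0 : ℝ) : IsGeodesicOn (circ n a b c t0) 0 (2 * π) := by
  have hx : ∀ s, HasDerivAt (fun s => c + ((1 - cos s) * a - sin s * b))
      (sin s * a - cos s * b) s := by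
    intro s
    have := ((((hasDerivAt_cos s).const_sub 1).mul_const a).sub
      ((hasDerivAt_sin s).mul_const b)).const_add c
    simpa using this
  have hy : ∀ s, HasDerivAt (fun s => (1 - cos s) * b + sin s * a)
      (sin s * b + cos s * a) s := by
    intro s
    have := ((((hasDerivAt_cos s).const_sub 1).mul_const b).add
      ((hasDerivAt_sin s).mul_const a))
    refine HasDerivAt.congr_deriv (f := fun s => (1 - cos s) * b + sin s * a) this ?_
    simp
  have ht : ∀ s, HasDerivAt (fun s => t0 + 2 * (s - sin s) * (a ^ 2 + b ^ 2)
      - 2 * c * ((1 - cos s) * b + sin s * a))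
      (2 * (1 - cos s) * (a ^ 2 + b ^ 2) - 2 * c * (sin s * b + cos s * a)) s := by
    intro s
    have := (((((hasDerivAt_id s).sub (hasDerivAt_sin s)).const_mul 2).mul_const
      (a ^ 2 + b ^ 2)).const_add t0).sub ((hy s).const_mul (2 * c))
    refine HasDerivAt.congr_deriv (f := fun s => t0 + 2 * (s - sin s) * (a ^ 2 + b ^ 2)
      - 2 * c * ((1 - cos s) * b + sin s * a)) this ?_
    simp
  apply geod_of (ENNReal.ofReal (√(a ^ 2 + b ^ 2) * (2 * π - 0)))
  · refine horiz_const hn _ _ _ _ _ _ (by positivity) hx hy ht (by fun_prop) (by fun_prop)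
      (by fun_prop) ?_
    intro s
    have := sin_sq_add_cos_sq s
    linear_combination 2 * (a ^ 2 + b ^ 2) * (-this)
  · refine len_const hn _ _ _ _ _ (by positivity) hx hy ?_
    intro s
    rw [Real.sq_sqrt (by positivity)]
    have := sin_sq_add_cos_sq s
    linear_combination (a ^ 2 + b ^ 2) * this
  · intro η u v hη e1 e2
    have := iso_ineq hη (by rw [e1, e2]; simp [circ, hproj])
    refine le_trans (le_of_eq ?_) this
    rw [e1, e2]
    congr 1
    have e : π * ((circ n a b c t0 (2 * π)).2.2 - (circ n a b c t0 0).2.2)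
        = (2 * π) ^ 2 * (a ^ 2 + b ^ 2) := by
      simp [circ]
      ring
    rw [e, Real.sqrt_mul (by positivity), Real.sqrt_sq (by positivity)]
    ring

theorem line_geod {n : ℕ} (hn : 1 ≤ n) (ρ t0 : ℝ) (hρ : 0 ≤ ρ) :
    IsGeodesicOn (fun s => ((fun _ => s / √n, fun _ => 0 / √n, t0) : Hpt n)) (-ρ) ρ := by
  apply geod_of (ENNReal.ofReal (1 * (ρ - (-ρ))))
  · exact horiz_const hn (fun s => s) (fun s => 0) (fun s => t0) (fun _ => 1) (fun _ => 0)
      (fun _ => 0) (by linarith) (fun s => hasDerivAt_id s) (fun s => hasDerivAt_const _ _)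
      (fun s => hasDerivAt_const _ _) (by fun_prop) (by fun_prop) (by fun_prop) (by simp)
  · exact len_const hn (fun s => s) (fun s => 0) (fun s => t0) (fun _ => 1) (fun _ => 0) zero_le_one
      (fun s => hasDerivAt_id s) (fun s => hasDerivAt_const _ _) (by simp)
  · intro η c d hη e1 e2
    have h := eVariationOn.edist_le (fun s => hproj (η s)) (right_mem_Icc.2 hη.1)
      (left_mem_Icc.2 hη.1)
    refine le_trans (le_of_eq ?_) h
    have h1 := norm_hproj_const hn (ρ - -ρ) 0 0
    have h2 : hproj ((fun _ => (ρ - -ρ) / √n, fun _ => 0 / √n, 0) : Hpt n)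
        = hproj (η d) - hproj (η c) := by
      rw [e1, e2, ← hprojL_apply, ← hprojL_apply, ← hprojL_apply, ← map_sub, hprojL_apply,
        hprojL_apply]
      ext i
      cases i <;> simp [hproj, add_div, neg_div]
    rw [h2] at h1
    rw [edist_dist, dist_eq_norm, h1]
    congr 1
    rw [one_mul, zero_pow two_ne_zero, add_zero, Real.sqrt_sq (by linarith)]

theorem mem_G2 {n : ℕ} (hn : 1 ≤ n) (r a b τ : ℝ) (hr : 0 ≤ r) (hr1 : 4 * π * r ^ 2 = 1)
    (hab : a ^ 2 + b ^ 2 = r ^ 2) (hτ : τ ∈ Icc 0 (2 * π)) (h0 : (1 - cos τ) * b + sin τ * a = 0)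
    (hρ : r ≤ (1 - cos τ) * a - sin τ * b) :
    (((fun _ => r / √n), (0 : Fin n → ℝ), 2 * (τ - sin τ) * r ^ 2) : Hpt n) ∈
      Gm ({((0 : Fin n → ℝ), (0 : Fin n → ℝ), (0 : ℝ)),
        ((0 : Fin n → ℝ), (0 : Fin n → ℝ), (1 : ℝ))} : Set (Hpt n)) 2 := by
  have key : ∀ a b : ℝ, a ^ 2 + b ^ 2 = r ^ 2 → circ n a b 0 0 τ ∈
      Gm ({((0 : Fin n → ℝ), (0 : Fin n → ℝ), (0 : ℝ)),
        ((0 : Fin n → ℝ), (0 : Fin n → ℝ), (1 : ℝ))} : Set (Hpt n)) 1 := by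
    intro a b hab
    refine ⟨_, Or.inl rfl, _, Or.inr rfl, circ n a b 0 0, 0, 2 * π, circ_geod hn a b 0 0, ?_, ?_,
      τ, hτ, rfl⟩
    · simp [circ]; rfl
    · have e : 2 * (2 * π) * r ^ 2 = 1 := by linarith
      simp [circ, hab, e]; rfl
  set ρ := (1 - cos τ) * a - sin τ * b with hρd
  refine ⟨_, key (-a) (-b) (by simpa using hab), _, key a b hab, _, -ρ, ρ,
    line_geod hn ρ (2 * (τ - sin τ) * r ^ 2) (by linarith), ?_, ?_, r, ⟨by linarith, hρ⟩, ?_⟩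
  · simp only [circ, neg_sq, hab]
    refine Prod.ext ?_ (Prod.ext ?_ ?_)
    · funext i; simp only [hρd]; ring
    · funext i
      simp only []
      rw [show (1 - cos τ) * -b + sin τ * -a = 0 by linarith]
    · simp
  · simp only [circ, hab]
    refine Prod.ext ?_ (Prod.ext ?_ ?_)
    · funext i; simp only [hρd]; ring
    · funext i
      simp only []
      rw [h0]
    · simp
  · refine Prod.ext rfl (Prod.ext ?_ rfl)
    funext i; simp

/-- For `T₀ = 1` and `A = {(0,0,0),(0,0,1)}`, the points
`p₂ = (R₁, 2(π/2-1)r₁²)` and `q₂ = (R₁, 2(3π/2+1)r₁²)` (in complex notation, so with zero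
`y`-part) belong to `G²(A)`, and the curve
`σ₂(s) = (R₁ + (1-e^{-is})R₂, 2(π/2-1)r₁² + 2(s - sin s)r₂² - 2 sin s ⟨R₁,R₂⟩)`,
`s ∈ [0,2π]`, is a geodesic connecting `p₂` to `q₂`. -/
theorem stmt_11 (n : ℕ) (hn : 1 ≤ n)
    (r₁ r₂ : ℝ) (R₁ R₂ : Fin n → ℝ)
    (hr₁ : r₁ = 1 / (2 * Real.sqrt π))
    (hr₂ : r₂ = r₁ * Real.sqrt ((π + 2) / (2 * π)))
    (hR₁ : R₁ = fun _ => r₁ / Real.sqrt n)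
    (hR₂ : R₂ = fun _ => r₂ / Real.sqrt n)
    (p₂ q₂ : Hpt n)
    (hp₂ : p₂ = (R₁, (0 : Fin n → ℝ), 2 * (π / 2 - 1) * r₁ ^ 2))
    (hq₂ : q₂ = (R₁, (0 : Fin n → ℝ), 2 * (3 * π / 2 + 1) * r₁ ^ 2))
    (σ₂ : ℝ → Hpt n)
    (hσ₂ : σ₂ = fun s =>
      ((fun i => R₁ i + (1 - Real.cos s) * R₂ i : Fin n → ℝ),
       (fun i => Real.sin s * R₂ i : Fin n → ℝ),
       2 * (π / 2 - 1) * r₁ ^ 2 + 2 * (s - Real.sin s) * r₂ ^ 2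
         - 2 * Real.sin s * ∑ i, R₁ i * R₂ i)) :
    p₂ ∈ Gm ({((0 : Fin n → ℝ), (0 : Fin n → ℝ), (0 : ℝ)),
        ((0 : Fin n → ℝ), (0 : Fin n → ℝ), (1 : ℝ))} : Set (Hpt n)) 2 ∧
    q₂ ∈ Gm ({((0 : Fin n → ℝ), (0 : Fin n → ℝ), (0 : ℝ)),
        ((0 : Fin n → ℝ), (0 : Fin n → ℝ), (1 : ℝ))} : Set (Hpt n)) 2 ∧
    IsGeodesicOn σ₂ 0 (2 * π) ∧ σ₂ 0 = p₂ ∧ σ₂ (2 * π) = q₂ := by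
  have hn' : (0 : ℝ) < n := by exact_mod_cast hn
  have hpi := Real.pi_pos
  have hr0 : 0 ≤ r₁ := by rw [hr₁]; positivity
  have h4 : 4 * π * r₁ ^ 2 = 1 := by
    rw [hr₁, div_pow, mul_pow, Real.sq_sqrt hpi.le]
    field_simp
    norm_num
  have hr2 : r₂ ^ 2 = r₁ ^ 2 * ((π + 2) / (2 * π)) := by
    rw [hr₂, mul_pow, Real.sq_sqrt (by positivity)]
  have h2 : √2 ^ 2 = (2 : ℝ) := Real.sq_sqrt (by norm_num)
  have h2' : (1 : ℝ) ≤ √2 := Real.one_le_sqrt.2 (by norm_num)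
  have ha : (r₁ / √2) ^ 2 + (r₁ / √2) ^ 2 = r₁ ^ 2 := by
    rw [div_pow, h2]; ring
  have hrho : r₁ ≤ r₁ / √2 + r₁ / √2 := by
    have : r₁ / √2 + r₁ / √2 = r₁ * √2 := by
      have : √2 ≠ (0 : ℝ) := by positivity
      field_simp
      rw [h2]; ring
    rw [this]
    nlinarith
  have c3 : cos (3 * π / 2) = 0 := by
    rw [show 3 * π / 2 = π / 2 + π by ring, cos_add_pi, cos_pi_div_two, neg_zero]
  have s3 : sin (3 * π / 2) = -1 := by
    rw [show 3 * π / 2 = π / 2 + π by ring, sin_add_pi, sin_pi_div_two]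
  have hs : σ₂ = circ n r₂ 0 r₁ (2 * (π / 2 - 1) * r₁ ^ 2) := by
    rw [hσ₂, hR₁, hR₂]
    funext s
    refine Prod.ext ?_ (Prod.ext ?_ ?_)
    · funext i
      simp only [circ]
      ring
    · funext i
      simp only [circ]
      ring
    · simp only [circ, Finset.sum_const, Finset.card_univ, Fintype.card_fin, nsmul_eq_mul]
      have : (n : ℝ) * (r₁ / √n * (r₂ / √n)) = r₁ * r₂ := by
        rw [div_mul_div_comm, Real.mul_self_sqrt hn'.le]
        field_simp
      rw [this]
      ring
  refine ⟨?_, ?_, ?_, ?_, ?_⟩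
  · have := mem_G2 hn r₁ (r₁ / √2) (-(r₁ / √2)) (π / 2) hr0 h4 (by rw [neg_sq]; exact ha)
      ⟨by positivity, by linarith⟩ (by simp) (by simpa using hrho)
    rw [hp₂, hR₁]
    simpa using this
  · have := mem_G2 hn r₁ (r₁ / √2) (r₁ / √2) (3 * π / 2) hr0 h4 ha
      ⟨by positivity, by linarith⟩ (by rw [c3, s3]; ring)
      (by rw [c3, s3]; linarith)
    rw [hq₂, hR₁]
    rw [s3, sub_neg_eq_add] at this
    exact this
  · rw [hs]
    exact circ_geod hn _ _ _ _
  · rw [hσ₂, hp₂]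
    simp
    rfl
  · rw [hσ₂, hq₂]
    refine Prod.ext ?_ (Prod.ext ?_ ?_)
    · funext i
      simp
    · funext i
      simp
    · simp only [sin_two_pi]
      rw [hr2]
      field_simp
      ring
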